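/- Let G=(V,E) be a tree (a finite connected acyclic simple graph). Then the total matching polytope P_T(G) equals exactly the set of points (x,y)∈ℝ^V×ℝ^E satisfying: x_v + Σ_{e∈δ(v)} y_e ≤ 1 for every v∈V; x_v + x_w + y_e ≤ 1 for every edge e={v,w}∈E; and x_v ≥ 0, y_e ≥ 0 for all v∈V, e∈E. -/

import Mathlib

open Finset

variable {V : Type*}

/-- Adjacency between elements (vertices and edges) of a graph. -/
def elemAdj (G : SimpleGraph V) : V ⊕ G.edgeSet → V ⊕ G.edgeSet → Prop
  | Sum.inl v, Sum.inl w => G.Adj v w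
  | Sum.inl v, Sum.inr e => v ∈ (e : Sym2 V)
  | Sum.inr e, Sum.inl v => v ∈ (e : Sym2 V)
  | Sum.inr e, Sum.inr f => e ≠ f ∧ ∃ v, v ∈ (e : Sym2 V) ∧ v ∈ (f : Sym2 V)

/-- A total matching is a set of pairwise non-adjacent elements. -/
def IsTotalMatching (G : SimpleGraph V) (T : Set (V ⊕ G.edgeSet)) : Prop :=
  ∀ d ∈ T, ∀ d' ∈ T, d ≠ d' → ¬ elemAdj G d d'

/-- Characteristic vector of a set of elements. -/
noncomputable def charVec (G : SimpleGraph V) (T : Set (V ⊕ G.edgeSet)) :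
    V ⊕ G.edgeSet → ℝ :=
  T.indicator fun _ => 1

/-- The total matching polytope: convex hull of characteristic vectors of total matchings. -/
def totalMatchingPolytope (G : SimpleGraph V) : Set ((V ⊕ G.edgeSet) → ℝ) :=
  convexHull ℝ {z | ∃ T, IsTotalMatching G T ∧ z = charVec G T}

/-- Membership in the star of a vertex. -/
def inStar (G : SimpleGraph V) (p : V) : V ⊕ G.edgeSet → Prop
  | Sum.inl v => v = p
  | Sum.inr e => p ∈ (e : Sym2 V)

theorem elemAdj_symm' (G : SimpleGraph V) (d d' : V ⊕ G.edgeSet) (h : elemAdj G d d') :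
    elemAdj G d' d := by
  rcases d with v | e <;> rcases d' with w | f
  · exact SimpleGraph.Adj.symm h
  · exact h
  · exact h
  · exact ⟨h.1.symm, h.2.imp fun _ hv => ⟨hv.2, hv.1⟩⟩

theorem isTotalMatching_insert (G : SimpleGraph V) {T : Set (V ⊕ G.edgeSet)}
    (hT : IsTotalMatching G T) {a : V ⊕ G.edgeSet} (ha : ∀ d ∈ T, ¬ elemAdj G a d) :
    IsTotalMatching G (insert a T) := by
  intro d hd d' hd' hne
  rcases hd with rfl | hd <;> rcases hd' with rfl | hd'
  · exact absurd rfl hne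
  · exact ha _ hd'
  · exact fun h => ha _ hd (elemAdj_symm' G _ _ h)
  · exact hT d hd d' hd' hne

/-- Greedy colouring argument along an ordering given by a rank function. -/
theorem greedy_mem (G : SimpleGraph V) (z : V ⊕ G.edgeSet → ℝ)
    (hz : ∀ d, 0 ≤ z d) (ρ : V ⊕ G.edgeSet → ℕ)
    (hC : ∀ a, ∃ C : Finset (V ⊕ G.edgeSet), a ∈ C ∧
      (∀ d, d ≠ a → elemAdj G a d → ρ d ≤ ρ a → d ∈ C) ∧ ∑ d ∈ C, z d ≤ 1)
    (S : Finset (V ⊕ G.edgeSet)) :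
    (S : Set (V ⊕ G.edgeSet)).indicator z ∈
      convexHull ℝ {y | ∃ T, IsTotalMatching G T ∧ T ⊆ (S : Set (V ⊕ G.edgeSet)) ∧
        y = charVec G T} := by
  classical
  induction S using Finset.induction_on_max_value ρ with
  | empty =>
    apply subset_convexHull
    refine ⟨∅, ?_, ?_, ?_⟩
    · intro d hd
      exact absurd hd (by simp)
    · simp
    · simp [charVec]
  | insert a S haS hmax ih =>
    obtain ⟨ι, _, w, c, hw0, hw1, hc, hsum⟩ := mem_convexHull_iff_exists_fintype.1 ih
    choose T hT hTS hcT using hc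
    obtain ⟨C, haC, hCm, hCs⟩ := hC a
    set A : ι → Prop := fun i => ∀ d ∈ T i, ¬ elemAdj G a d with hA
    set W : ℝ := ∑ i, if A i then w i else 0 with hW
    have hcoord : ∀ d, ∑ i, w i * c i d = (S : Set (V ⊕ G.edgeSet)).indicator z d := by
      intro d
      rw [← hsum]
      simp [Finset.sum_apply]
    have hc0 : ∀ i d, 0 ≤ c i d := by
      intro i d
      rw [hcT i]
      exact Set.indicator_nonneg (fun _ _ => zero_le_one) d
    have h1 : 1 - W ≤ ∑ d ∈ C.erase a, z d := by
      calc 1 - W = ∑ i, (w i - if A i then w i else 0) := by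
            rw [Finset.sum_sub_distrib, hw1]
        _ ≤ ∑ i, w i * ∑ d ∈ C.erase a, c i d := by
            refine Finset.sum_le_sum fun i _ => ?_
            split_ifs with h
            · rw [sub_self]
              exact mul_nonneg (hw0 i) (Finset.sum_nonneg fun d _ => hc0 i d)
            · simp only [hA, not_forall, not_not] at h
              obtain ⟨d, hd, had⟩ := h
              have hdS : d ∈ S := by simpa using hTS i hd
              have hne : d ≠ a := fun h => haS (h ▸ hdS)
              have hdC : d ∈ C.erase a :=
                Finset.mem_erase.2 ⟨hne, hCm d hne had (hmax d hdS)⟩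
              have h2 : c i d = 1 := by
                rw [hcT i]
                simp [charVec, hd]
              have h3 := Finset.single_le_sum (f := c i) (fun d _ => hc0 i d) hdC
              rw [h2] at h3
              nlinarith [hw0 i]
        _ = ∑ d ∈ C.erase a, (S : Set (V ⊕ G.edgeSet)).indicator z d := by
            simp_rw [Finset.mul_sum]
            rw [Finset.sum_comm]
            exact Finset.sum_congr rfl fun d _ => hcoord d
        _ ≤ ∑ d ∈ C.erase a, z d :=
            Finset.sum_le_sum fun d _ => Set.indicator_le_self' (fun x _ => hz x) d
    have h2 : z a ≤ W := by
      have := Finset.add_sum_erase C z haC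
      linarith
    have hza := hz a
    obtain ⟨l, hl0, hl1, hlW⟩ : ∃ l : ℝ, 0 ≤ l ∧ l ≤ 1 ∧ l * W = z a := by
      rcases (hza.trans h2).eq_or_lt with h | h
      · exact ⟨0, le_rfl, zero_le_one, by linarith⟩
      · exact ⟨z a / W, div_nonneg hza h.le, (div_le_one h).2 h2, div_mul_cancel₀ _ h.ne'⟩
    have hmem : ∀ i, c i + (if A i then l • Pi.single a (1:ℝ) else 0) ∈
        convexHull ℝ {y | ∃ T, IsTotalMatching G T ∧
          T ⊆ ((insert a S : Finset _) : Set (V ⊕ G.edgeSet)) ∧ y = charVec G T} := by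
      intro i
      have hTS' : T i ⊆ ((insert a S : Finset _) : Set (V ⊕ G.edgeSet)) :=
        (hTS i).trans (by simp)
      have m1 : c i ∈ convexHull ℝ {y | ∃ T, IsTotalMatching G T ∧
          T ⊆ ((insert a S : Finset _) : Set (V ⊕ G.edgeSet)) ∧ y = charVec G T} :=
        subset_convexHull _ _ ⟨T i, hT i, hTS', hcT i⟩
      split_ifs with h
      · have haT : a ∉ T i := fun h => haS (by simpa using hTS i h)
        have m2 : c i + Pi.single a (1:ℝ) ∈ convexHull ℝ {y | ∃ T, IsTotalMatching G T ∧
          T ⊆ ((insert a S : Finset _) : Set (V ⊕ G.edgeSet)) ∧ y = charVec G T} := by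
          refine subset_convexHull _ _ ⟨insert a (T i), isTotalMatching_insert G (hT i) h,
            Set.insert_subset (by simp) hTS', ?_⟩
          rw [hcT i]
          funext d
          by_cases hd : d = a
          · subst hd
            simp [charVec, haT]
          · simp [charVec, hd, Set.indicator]
        have := convex_convexHull ℝ _ m1 m2 (sub_nonneg.2 hl1) hl0 (by ring)
        convert this using 1
        rw [smul_add, sub_smul, one_smul]
        abel
      · simpa using m1
    have := (convex_convexHull ℝ _).sum_mem (t := Finset.univ) (w := w)
      (fun i _ => hw0 i) hw1 (fun i _ => hmem i)
    convert this using 1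
    funext d
    simp only [Finset.sum_apply, Pi.smul_apply, Pi.add_apply, smul_eq_mul, mul_add,
      Finset.sum_add_distrib]
    rw [hcoord]
    by_cases hd : d = a
    · subst hd
      have : ∀ i, w i * ((if A i then l • Pi.single d (1:ℝ) else 0 : V ⊕ G.edgeSet → ℝ) d)
          = l * (if A i then w i else 0) := by
        intro i
        split_ifs <;> simp [mul_comm]
      simp_rw [this]
      rw [← Finset.mul_sum, hlW]
      simp [haS]
    · have : ∀ i, w i * ((if A i then l • Pi.single a (1:ℝ) else 0 : V ⊕ G.edgeSet → ℝ) d)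
          = 0 := by
        intro i
        split_ifs <;> simp [hd]
      simp_rw [this]
      simp [Set.indicator, hd]

theorem parent_unique (G : SimpleGraph V) (hG : G.IsTree) (r v w w' : V)
    (h : G.Adj w v) (h' : G.Adj w' v) (hd : G.dist r v = G.dist r w + 1)
    (hd' : G.dist r v = G.dist r w' + 1) : w = w' := by
  obtain ⟨p, hp⟩ := hG.connected.exists_walk_length_eq_dist r w
  obtain ⟨q, hq⟩ := hG.connected.exists_walk_length_eq_dist r w'
  have h1 : (p.concat h).IsPath :=
    (p.concat h).isPath_of_length_eq_dist (by rw [SimpleGraph.Walk.length_concat, hp, hd])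
  have h2 : (q.concat h').IsPath :=
    (q.concat h').isPath_of_length_eq_dist (by rw [SimpleGraph.Walk.length_concat, hq, hd'])
  have h3 := (hG.existsUnique_path r v).unique h1 h2
  have := congrArg SimpleGraph.Walk.penultimate h3
  simpa using this

/-- Rank of an element with respect to a root. -/
noncomputable def elemRank (G : SimpleGraph V) (r : V) : V ⊕ G.edgeSet → ℕ
  | Sum.inl v => 2 * G.dist r v
  | Sum.inr e => Sym2.lift ⟨fun a b => G.dist r a + G.dist r b, fun _ _ => add_comm _ _⟩
      (e : Sym2 V)

open Classical in
theorem sum_inStar [Fintype V] [DecidableEq V] (G : SimpleGraph V) [DecidableRel G.Adj]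
    (z : V ⊕ G.edgeSet → ℝ) (p : V) :
    ∑ d ∈ Finset.univ.filter (inStar G p), z d =
    z (Sum.inl p) + ∑ e : G.edgeSet, (if p ∈ (e : Sym2 V) then z (Sum.inr e) else 0) := by
  rw [Finset.sum_filter, Fintype.sum_sum_type]
  congr 1
  · rw [Finset.sum_eq_single p]
    · simp [inStar]
    · intro b _ hb
      simp [inStar, hb]
    · simp
  · refine Finset.sum_congr rfl fun e _ => ?_
    by_cases h : p ∈ (e : Sym2 V) <;> simp [inStar, h]

theorem exists_clique [Fintype V] [DecidableEq V] (G : SimpleGraph V) [DecidableRel G.Adj]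
    (hG : G.IsTree) (z : V ⊕ G.edgeSet → ℝ) (h0 : ∀ d, 0 ≤ z d)
    (h1 : ∀ v : V, z (Sum.inl v) +
            ∑ e : G.edgeSet, (if v ∈ (e : Sym2 V) then z (Sum.inr e) else 0) ≤ 1)
    (h2 : ∀ v w : V, ∀ h : G.Adj v w,
            z (Sum.inl v) + z (Sum.inl w) +
              z (Sum.inr ⟨s(v,w), G.mem_edgeSet.mpr h⟩) ≤ 1) (r : V) (a : V ⊕ G.edgeSet) :
    ∃ C : Finset (V ⊕ G.edgeSet), a ∈ C ∧
      (∀ d, d ≠ a → elemAdj G a d → elemRank G r d ≤ elemRank G r a → d ∈ C) ∧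
      ∑ d ∈ C, z d ≤ 1 := by
  classical
  rcases a with v | ⟨e, he⟩
  · by_cases hp : ∃ p, G.Adj v p ∧ G.dist r v = G.dist r p + 1
    · obtain ⟨p, hvp, hd⟩ := hp
      refine ⟨{Sum.inl v, Sum.inl p, Sum.inr ⟨s(v,p), G.mem_edgeSet.mpr hvp⟩}, by simp, ?_, ?_⟩
      · rintro (w | ⟨f, hf⟩) hne hadj hr
        · have hadj : G.Adj v w := hadj
          have hr : 2 * G.dist r w ≤ 2 * G.dist r v := hr
          have hd' : G.dist r v = G.dist r w + 1 := by
            rcases hG.dist_eq_dist_add_one_of_adj r hadj with h | h <;> omega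
          have := parent_unique G hG r v w p hadj.symm hvp.symm hd' hd
          simp [this]
        · have hadj : v ∈ f := hadj
          obtain ⟨w, rfl⟩ := Sym2.mem_iff_exists.1 hadj
          have hvw : G.Adj v w := hf
          have hr : G.dist r v + G.dist r w ≤ 2 * G.dist r v := hr
          have hd' : G.dist r v = G.dist r w + 1 := by
            rcases hG.dist_eq_dist_add_one_of_adj r hvw with h | h <;> omega
          have := parent_unique G hG r v w p hvw.symm hvp.symm hd' hd
          subst this
          simp
      · have hne : v ≠ p := hvp.ne
        rw [Finset.sum_insert (by simp [hne]), Finset.sum_insert (by simp), Finset.sum_singleton]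
        linarith [h2 v p hvp]
    · push Not at hp
      refine ⟨{Sum.inl v}, by simp, ?_, ?_⟩
      · rintro (w | ⟨f, hf⟩) hne hadj hr
        · have hadj : G.Adj v w := hadj
          have hr : 2 * G.dist r w ≤ 2 * G.dist r v := hr
          have := hp w hadj
          rcases hG.dist_eq_dist_add_one_of_adj r hadj with h | h <;> omega
        · have hadj : v ∈ f := hadj
          obtain ⟨w, rfl⟩ := Sym2.mem_iff_exists.1 hadj
          have hvw : G.Adj v w := hf
          have hr : G.dist r v + G.dist r w ≤ 2 * G.dist r v := hr
          have := hp w hvw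
          rcases hG.dist_eq_dist_add_one_of_adj r hvw with h | h <;> omega
      · rw [Finset.sum_singleton]
        have : 0 ≤ ∑ e : G.edgeSet, (if v ∈ (e : Sym2 V) then z (Sum.inr e) else 0) :=
          Finset.sum_nonneg fun e _ => by
            split_ifs
            · exact h0 _
            · exact le_rfl
        linarith [h1 v]
  · have key : ∃ v p, e = s(v, p) ∧ G.Adj v p ∧ G.dist r v = G.dist r p + 1 := by
      induction e using Sym2.ind with
      | _ x y =>
        have hxy : G.Adj x y := he
        rcases hG.dist_eq_dist_add_one_of_adj r hxy with h | h
        · exact ⟨x, y, rfl, hxy, h⟩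
        · exact ⟨y, x, Sym2.eq_swap, hxy.symm, h⟩
    obtain ⟨v, p, rfl, hvp, hd⟩ := key
    refine ⟨Finset.univ.filter (inStar G p), by simp [inStar], ?_, ?_⟩
    · rintro (w | ⟨f, hf⟩) hne hadj hr
      · have hadj : w ∈ s(v, p) := hadj
        have hr : 2 * G.dist r w ≤ G.dist r v + G.dist r p := hr
        rcases Sym2.mem_iff.1 hadj with rfl | rfl
        · omega
        · simp [inStar]
      · obtain ⟨-, u, hu, huf⟩ := hadj
        have hu : u ∈ s(v, p) := hu
        have huf : u ∈ f := huf
        rcases Sym2.mem_iff.1 hu with rfl | rfl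
        · obtain ⟨w, rfl⟩ := Sym2.mem_iff_exists.1 huf
          have huw : G.Adj u w := hf
          have hr : G.dist r u + G.dist r w ≤ G.dist r u + G.dist r p := hr
          have hd' : G.dist r u = G.dist r w + 1 := by
            rcases hG.dist_eq_dist_add_one_of_adj r huw with h | h <;> omega
          have := parent_unique G hG r u w p huw.symm hvp.symm hd' hd
          subst this
          exact absurd rfl hne
        · simpa [inStar] using huf
    · rw [sum_inStar]
      exact h1 p

theorem charVec_clique (G : SimpleGraph V) {T : Set (V ⊕ G.edgeSet)}
    (hT : IsTotalMatching G T) (C : Finset (V ⊕ G.edgeSet))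
    (hC : ∀ d ∈ C, ∀ d' ∈ C, d ≠ d' → elemAdj G d d') : ∑ d ∈ C, charVec G T d ≤ 1 := by
  classical
  by_cases h : ∃ d ∈ C, d ∈ T
  · obtain ⟨d, hdC, hdT⟩ := h
    rw [Finset.sum_eq_single_of_mem d hdC]
    · simp [charVec, hdT]
    · intro b hb hne
      have : b ∉ T := fun hbT => hT b hbT d hdT hne (hC b hb d hdC hne)
      simp [charVec, this]
  · push Not at h
    rw [Finset.sum_eq_zero]
    · exact zero_le_one
    · intro d hd
      simp [charVec, h d hd]

/-- for a tree, the total matching polytope is exactly the set of points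
satisfying the node, edge and nonnegativity inequalities. -/
theorem totalMatchingPolytope_eq_basic_of_isTree
    [Fintype V] [DecidableEq V] (G : SimpleGraph V) [DecidableRel G.Adj]
    (hG : G.IsTree) :
    totalMatchingPolytope G =
      {z : (V ⊕ G.edgeSet) → ℝ |
        (∀ d, 0 ≤ z d) ∧
        (∀ v : V, z (Sum.inl v) +
            ∑ e : G.edgeSet, (if v ∈ (e : Sym2 V) then z (Sum.inr e) else 0) ≤ 1) ∧
        (∀ v w : V, ∀ h : G.Adj v w,
            z (Sum.inl v) + z (Sum.inl w) +
              z (Sum.inr ⟨s(v,w), G.mem_edgeSet.mpr h⟩) ≤ 1)} := by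
  classical
  apply Set.Subset.antisymm
  · apply convexHull_min
    · rintro z ⟨T, hT, rfl⟩
      refine ⟨fun d => Set.indicator_nonneg (fun _ _ => zero_le_one) d, fun v => ?_,
        fun v w h => ?_⟩
      · rw [← sum_inStar]
        apply charVec_clique G hT
        rintro (x | e) hd (y | f) hd' hne
        · simp [inStar] at hd hd'
          subst hd hd'
          exact absurd rfl hne
        · simp [inStar] at hd hd'
          subst hd
          exact hd'
        · simp [inStar] at hd hd'
          subst hd'
          exact hd
        · simp [inStar] at hd hd'
          exact ⟨fun h => hne (by rw [h]), v, hd, hd'⟩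
      · have hne : v ≠ w := h.ne
        have := charVec_clique G hT
          {Sum.inl v, Sum.inl w, Sum.inr ⟨s(v,w), G.mem_edgeSet.mpr h⟩} (by
            intro d hd d' hd' hdd
            simp only [Finset.mem_insert, Finset.mem_singleton] at hd hd'
            rcases hd with rfl | rfl | rfl <;> rcases hd' with rfl | rfl | rfl <;>
              first
              | exact absurd rfl hdd
              | exact h
              | exact h.symm
              | exact Sym2.mem_mk_left _ _
              | exact Sym2.mem_mk_right _ _)
        rw [Finset.sum_insert (by simp [hne]), Finset.sum_insert (by simp),
          Finset.sum_singleton] at this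
        linarith
    · rintro x ⟨hx0, hx1, hx2⟩ y ⟨hy0, hy1, hy2⟩ a b ha hb hab
      refine ⟨fun d => ?_, fun v => ?_, fun v w h => ?_⟩
      · exact add_nonneg (mul_nonneg ha (hx0 d)) (mul_nonneg hb (hy0 d))
      · have e1 := mul_le_mul_of_nonneg_left (hx1 v) ha
        have e2 := mul_le_mul_of_nonneg_left (hy1 v) hb
        rw [← sum_inStar] at e1 e2 ⊢
        simp only [Pi.add_apply, Pi.smul_apply, smul_eq_mul, Finset.sum_add_distrib,
          ← Finset.mul_sum]
        linarith
      · have e1 := mul_le_mul_of_nonneg_left (hx2 v w h) ha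
        have e2 := mul_le_mul_of_nonneg_left (hy2 v w h) hb
        simp only [Pi.add_apply, Pi.smul_apply, smul_eq_mul]
        linarith
  · rintro z ⟨h0, h1, h2⟩
    obtain ⟨r⟩ := hG.connected.nonempty
    have := greedy_mem G z h0 (elemRank G r) (exists_clique G hG z h0 h1 h2 r) Finset.univ
    rw [Finset.coe_univ, Set.indicator_univ] at this
    refine convexHull_mono ?_ this
    rintro y ⟨T, hT, -, rfl⟩
    exact ⟨T, hT, rfl⟩
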